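/- arXiv:2306.17272 — 2 statements merged into one kernel-verified Lean document; each statement's English description precedes it below -/
import Mathlib

section
/- Let G be a connected graph containing neither C4 nor C5 as a subgraph. Then the following are equivalent: (1) G belongs to the class W2; (2) either G is isomorphic to K2, or there exists a partition {T1, T2, ..., Tk} of V(G) such that for each 1 ≤ i ≤ k the induced subgraph G[Ti] is a triangle containing at least two simplicial vertices of G. -/
open SimpleGraph

/-- A set of vertices is independent if its elements are pairwise nonadjacent. -/
def IsIndep {V : Type*} (G : SimpleGraph V) (S : Set V) : Prop :=
  S.Pairwise fun a b => ¬ G.Adj a b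

/-- The closed neighborhood `N[S]` of a set of vertices. -/
def closedNbhd {V : Type*} (G : SimpleGraph V) (S : Set V) : Set V :=
  S ∪ {x | ∃ s ∈ S, G.Adj s x}

/-- The open neighborhood `N(S) = N[S] \ S` of a set of vertices. -/
def openNbhd {V : Type*} (G : SimpleGraph V) (S : Set V) : Set V :=
  closedNbhd G S \ S

/-- `S` dominates `T` if `T ⊆ N[S]`. -/
def Dominates {V : Type*} (G : SimpleGraph V) (S T : Set V) : Prop :=
  T ⊆ closedNbhd G S

/-- `N₂(v)`: the set of vertices at distance exactly 2 from `v`. -/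
def N2 {V : Type*} (G : SimpleGraph V) (v : V) : Set V :=
  {u | u ≠ v ∧ ¬ G.Adj v u ∧ ∃ w, G.Adj v w ∧ G.Adj w u}

/-- A maximal independent set of the subgraph of `G` induced by `A`. -/
def IsMaximalIndepOn {V : Type*} (G : SimpleGraph V) (A S : Set V) : Prop :=
  S ⊆ A ∧ IsIndep G S ∧ ∀ T, T ⊆ A → IsIndep G T → S ⊆ T → S = T

/-- A maximal independent set of `G`. -/
def IsMaximalIndep {V : Type*} (G : SimpleGraph V) (S : Set V) : Prop :=
  IsMaximalIndepOn G Set.univ S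

/-- A maximum independent set of the subgraph of `G` induced by `A`. -/
def IsMaxIndepOn {V : Type*} (G : SimpleGraph V) (A S : Set V) : Prop :=
  S ⊆ A ∧ IsIndep G S ∧ ∀ T, T ⊆ A → IsIndep G T → T.ncard ≤ S.ncard

/-- A maximum independent set of `G`. -/
def IsMaxIndep {V : Type*} (G : SimpleGraph V) (S : Set V) : Prop :=
  IsMaxIndepOn G Set.univ S

/-- The independence number of the subgraph of `G` induced by `A`. -/
noncomputable def alphaOn {V : Type*} (G : SimpleGraph V) (A : Set V) : ℕ :=
  sSup {n | ∃ S, S ⊆ A ∧ IsIndep G S ∧ S.ncard = n}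

/-- The independence number `α(G)`. -/
noncomputable def alpha {V : Type*} (G : SimpleGraph V) : ℕ :=
  alphaOn G Set.univ

/-- The subgraph of `G` induced by `A` is well-covered. -/
def WellCoveredOn {V : Type*} (G : SimpleGraph V) (A : Set V) : Prop :=
  ∀ S, IsMaximalIndepOn G A S → IsMaxIndepOn G A S

/-- `G` is well-covered: every maximal independent set is maximum. -/
def WellCovered {V : Type*} (G : SimpleGraph V) : Prop :=
  WellCoveredOn G Set.univ

/-- The subgraph of `G` induced by `A` is in the class `W₂`. -/
def W2On {V : Type*} (G : SimpleGraph V) (A : Set V) : Prop :=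
  ∀ S₁ S₂ : Set V, S₁ ⊆ A → S₂ ⊆ A → IsIndep G S₁ → IsIndep G S₂ → Disjoint S₁ S₂ →
    ∃ T₁ T₂ : Set V, S₁ ⊆ T₁ ∧ S₂ ⊆ T₂ ∧ IsMaxIndepOn G A T₁ ∧ IsMaxIndepOn G A T₂ ∧
      Disjoint T₁ T₂

/-- `G` belongs to the class `W₂`: every two pairwise disjoint independent sets are
included in two pairwise disjoint maximum independent sets. -/
def W2 {V : Type*} (G : SimpleGraph V) : Prop :=
  W2On G Set.univ

/-- `v` is a shedding vertex: for every independent set `S ⊆ V(G) \ N[v]` there exists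
`u ∈ N(v)` such that `S ∪ {u}` is independent. -/
def Shedding {V : Type*} (G : SimpleGraph V) (v : V) : Prop :=
  ∀ S : Set V, Disjoint S (closedNbhd G {v}) → IsIndep G S →
    ∃ u ∈ G.neighborSet v, IsIndep G (insert u S)

/-- The edge `xy` is relating: there is an independent set `S ⊆ V(G) \ N[{x,y}]` such
that both `S ∪ {x}` and `S ∪ {y}` are maximal independent sets of `G`. -/
def Relating {V : Type*} (G : SimpleGraph V) (x y : V) : Prop :=
  ∃ S : Set V, IsIndep G S ∧ Disjoint S (closedNbhd G {x, y}) ∧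
    IsMaximalIndep G (insert x S) ∧ IsMaximalIndep G (insert y S)

/-- `G` contains no cycle of length `k` (as a subgraph). -/
def CycleFree {V : Type*} (G : SimpleGraph V) (k : ℕ) : Prop :=
  ∀ (u : V) (w : G.Walk u u), w.IsCycle → w.length ≠ k

/-- A vertex is simplicial if its closed neighborhood is a clique. -/
def Simplicial {V : Type*} (G : SimpleGraph V) (v : V) : Prop :=
  G.IsClique (closedNbhd G {v})

/-!
In a `W₂` graph every vertex `v` is shedding. Without `C₅`, private neighbours outside `N[v]` chosen
one for each neighbour of `v` form an independent set, so shedding forces some neighbour `a` of `v`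
to have `N[a] ⊆ N[v]`; without `C₄`, such an `a` is simplicial. The same argument at `a` gives a
neighbour `b` with `N[b] = N[a]`, so `v` lies in a clique which is the closed neighbourhood of two
vertices. Two such cliques meeting in `v` coincide, for otherwise exchanging `v` for a simplicial
vertex of each would enlarge a maximum independent set through `v`.

Conversely, if such cliques partition `V`, an independent set `S` disjoint from an independent set
`X` is maximum as soon as it is maximal among those avoiding `X`: at most one of the two simplicial
vertices of each clique lies in `X`, so `S` meets every clique.
-/

section Neighbourhoods

variable {V : Type*} {G : SimpleGraph V} {T : Set V} {s t v x : V}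

theorem mem_closedNbhd_singleton : x ∈ closedNbhd G {v} ↔ x = v ∨ G.Adj v x := by
  simp [closedNbhd]

theorem self_mem_closedNbhd_singleton (G : SimpleGraph V) (v : V) : v ∈ closedNbhd G {v} :=
  mem_closedNbhd_singleton.2 (Or.inl rfl)

theorem subset_closedNbhd_of_isClique (hT : G.IsClique T) (hv : v ∈ T) :
    T ⊆ closedNbhd G {v} := fun _ hx =>
  mem_closedNbhd_singleton.2 <| or_iff_not_imp_left.2 fun hxv => hT hv hx (Ne.symm hxv)

theorem simplicial_iff_isClique_neighborSet : Simplicial G v ↔ G.IsClique (G.neighborSet v) := by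
  have hinsert : closedNbhd G {v} = insert v (G.neighborSet v) := by
    ext x; simp [mem_closedNbhd_singleton]
  rw [Simplicial, hinsert, isClique_insert]
  exact and_iff_left fun _ hx _ => hx

theorem Simplicial.closedNbhd_eq_of_mem (hs : Simplicial G s) (ht : Simplicial G t)
    (hst : t ∈ closedNbhd G {s}) : closedNbhd G {s} = closedNbhd G {t} := by
  have hsub : closedNbhd G {s} ⊆ closedNbhd G {t} := subset_closedNbhd_of_isClique hs hst
  exact hsub.antisymm <|
    subset_closedNbhd_of_isClique ht (hsub (self_mem_closedNbhd_singleton G s))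

theorem eq_univ_of_closedNbhd_subset (hG : G.Preconnected) (hT : T.Nonempty)
    (hclosed : closedNbhd G T ⊆ T) : T = Set.univ := by
  obtain ⟨u, hu⟩ := hT
  refine Set.eq_univ_of_forall fun w => by_contra fun hw => ?_
  obtain ⟨p⟩ := hG u w
  obtain ⟨d, -, hfst, hsnd⟩ := p.exists_boundary_dart T hu hw
  exact hsnd (hclosed (Or.inr ⟨d.fst, hfst, d.adj⟩))

end Neighbourhoods

section IndependentSets

variable {V : Type*} {G : SimpleGraph V} {S T : Set V} {s t v x : V}

theorem isIndep_insert : IsIndep G (insert x S) ↔ IsIndep G S ∧ ∀ y ∈ S, ¬ G.Adj x y := by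
  have : Std.Symm fun a b => ¬ G.Adj a b := ⟨fun _ _ hab hba => hab hba.symm⟩
  rw [IsIndep, Set.pairwise_insert_of_symm]
  exact and_congr_right fun _ => forall₂_congr fun y _ =>
    ⟨fun h hxy => h hxy.ne hxy, fun h _ => h⟩

theorem IsIndep.disjoint_sdiff_singleton_of_isClique (hS : IsIndep G S) (hT : G.IsClique T)
    (hvS : v ∈ S) (hvT : v ∈ T) : Disjoint (S \ {v}) T :=
  Set.disjoint_left.2 fun _ hy hyT => hS hy.1 hvS hy.2 (hT hyT hvT hy.2)

variable [Finite V]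

theorem IsMaxIndep.exists_adj_of_notMem (hT : IsMaxIndep G T) (hv : v ∉ T) :
    ∃ u ∈ T, G.Adj v u := by
  by_contra! hadj
  have hle := hT.2.2 _ (Set.subset_univ _) (isIndep_insert.2 ⟨hT.2.1, hadj⟩)
  rw [Set.ncard_insert_of_notMem hv] at hle
  omega

theorem IsMaxIndep.closedNbhd_eq_of_simplicial (hS : IsMaxIndep G S) (hvS : v ∈ S)
    (hs : Simplicial G s) (ht : Simplicial G t) (hvs : v ∈ closedNbhd G {s})
    (hvt : v ∈ closedNbhd G {t}) : closedNbhd G {s} = closedNbhd G {t} := by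
  refine hs.closedNbhd_eq_of_mem ht (by_contra fun hts => ?_)
  have hdisj {r y : V} (hr : Simplicial G r) (hvr : v ∈ closedNbhd G {r}) (hy : y ∈ S \ {v}) :
      y ≠ r ∧ ¬ G.Adj r y := by
    simpa only [mem_closedNbhd_singleton, not_or] using
      Set.disjoint_left.1 (hS.2.1.disjoint_sdiff_singleton_of_isClique hr hvS hvr) hy
  obtain ⟨hne, hst⟩ : t ≠ s ∧ ¬ G.Adj s t := by
    simpa only [mem_closedNbhd_singleton, not_or] using hts
  have hindep : IsIndep G (insert s (insert t (S \ {v}))) := by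
    rw [isIndep_insert, isIndep_insert, Set.forall_mem_insert]
    exact ⟨⟨hS.2.1.mono Set.sdiff_subset, fun y hy => (hdisj ht hvt hy).2⟩,
      hst, fun y hy => (hdisj hs hvs hy).2⟩
  have hsnotMem : s ∉ insert t (S \ {v}) := by
    rintro (heq | hsS)
    exacts [hne heq.symm, (hdisj hs hvs hsS).1 rfl]
  have htnotMem : t ∉ S \ {v} := fun htS => (hdisj ht hvt htS).1 rfl
  have hle := hS.2.2 _ (Set.subset_univ _) hindep
  rw [Set.ncard_insert_of_notMem hsnotMem, Set.ncard_insert_of_notMem htnotMem] at hle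
  have hcard := Set.ncard_sdiff_singleton_add_one hvS
  omega

theorem IsIndep.isMaxIndep_of_forall_inter_nonempty {P : Set (Set V)} (hS : IsIndep G S)
    (hP : Setoid.IsPartition P) (hclique : ∀ T ∈ P, G.IsClique T)
    (hmeets : ∀ T ∈ P, (S ∩ T).Nonempty) : IsMaxIndep G S := by
  refine ⟨Set.subset_univ _, hS, fun U _ hU => ?_⟩
  have hrep (u : V) : ∃ Q ∈ P, u ∈ Q ∧ ∃ r ∈ S, r ∈ Q := by
    obtain ⟨Q, ⟨hQ, huQ⟩, -⟩ := hP.2 u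
    exact ⟨Q, hQ, huQ, hmeets Q hQ⟩
  choose Q hQ hmemQ r hrS hrQ using hrep
  refine Set.ncard_le_ncard_of_injOn r (fun u _ => hrS u) fun u hu w hw hr => ?_
  have hQuw : Q u = Q w := Setoid.eq_of_mem_eqv_class hP.2 (hQ u) (hrQ u) (hQ w) (hr ▸ hrQ w)
  by_contra huw
  exact hU hu hw huw (hclique _ (hQ u) (hmemQ u) (hQuw ▸ hmemQ w) huw)

end IndependentSets

section W2

variable {V : Type*} {G : SimpleGraph V}

theorem w2_iff_forall_exists_isMaxIndep :
    W2 G ↔ ∀ S X : Set V, IsIndep G S → IsIndep G X → Disjoint S X →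
      ∃ T, S ⊆ T ∧ IsMaxIndep G T ∧ Disjoint T X := by
  refine ⟨fun hW S X hS hX hSX => ?_, fun h S X _ _ hS hX hSX => ?_⟩
  · obtain ⟨T, U, hST, hXU, hT, -, hTU⟩ :=
      hW S X (Set.subset_univ _) (Set.subset_univ _) hS hX hSX
    exact ⟨T, hST, hT, hTU.mono_right hXU⟩
  · obtain ⟨T, hST, hT, hTX⟩ := h S X hS hX hSX
    obtain ⟨U, hXU, hU, hUT⟩ := h X T hX hT.2.1 hTX.symm
    exact ⟨T, U, hST, hXU, hT, hU, hUT.symm⟩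

theorem W2.exists_isMaxIndep_mem (hW : W2 G) (v : V) : ∃ S, IsMaxIndep G S ∧ v ∈ S := by
  obtain ⟨S, hvS, hS, -⟩ := w2_iff_forall_exists_isMaxIndep.1 hW {v} ∅
    (Set.pairwise_singleton _ _) (Set.pairwise_empty _) (Set.disjoint_empty _)
  exact ⟨S, hS, hvS rfl⟩

theorem W2.shedding [Finite V] (hW : W2 G) (v : V) : Shedding G v := by
  intro S hSv hS
  have hvS : Disjoint S {v} := hSv.mono_right Set.subset_union_left
  obtain ⟨T, hST, hT, hTv⟩ := w2_iff_forall_exists_isMaxIndep.1 hW S {v} hS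
    (Set.pairwise_singleton _ _) hvS
  obtain ⟨u, huT, hvu⟩ := hT.exists_adj_of_notMem (Set.disjoint_singleton_right.1 hTv)
  exact ⟨u, hvu, hT.2.1.mono (Set.insert_subset huT hST)⟩

end W2

section ShortCycles

variable {V : Type*} {G : SimpleGraph V} {a b v x y : V}

theorem CycleFree.not_adj_of_isPath {p : G.Walk x y} (hG : CycleFree G (p.length + 1))
    (hp : p.IsPath) (hlen : p.length ≠ 1) : ¬ G.Adj y x := fun hyx =>
  hG y (.cons hyx p) ((Walk.cons_isCycle_iff p hyx).2
    ⟨hp, fun hmem => hlen (hp.length_eq_one_of_mem_edges (Sym2.eq_swap ▸ hmem))⟩) rfl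

theorem CycleFree.commonNeighbors_subsingleton (h4 : CycleFree G 4) (hxy : x ≠ y) :
    (G.commonNeighbors x y).Subsingleton := by
  rintro a ⟨hxa, hya⟩ b ⟨hxb, hyb⟩
  rw [mem_neighborSet] at hxa hya hxb hyb
  by_contra hab
  let p : G.Walk a y := .cons hxa.symm (.cons hxb (.cons hyb.symm .nil))
  have hp : p.IsPath := by
    simp [p, hab, hxy, hxa.ne', hya.ne', hxb.ne, hyb.ne']
  exact CycleFree.not_adj_of_isPath (p := p) h4 hp (by simp [p]) hya

theorem CycleFree.not_adj_of_notMem_closedNbhd (h5 : CycleFree G 5) (hva : G.Adj v a)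
    (hvb : G.Adj v b) (hab : a ≠ b) (hax : G.Adj a x) (hby : G.Adj b y)
    (hx : x ∉ closedNbhd G {v}) (hy : y ∉ closedNbhd G {v}) : ¬ G.Adj y x := by
  rw [mem_closedNbhd_singleton, not_or] at hx hy
  intro hyx
  let p : G.Walk x y := .cons hax.symm (.cons hva.symm (.cons hvb (.cons hby .nil)))
  have hxb : x ≠ b := by rintro rfl; exact hx.2 hvb
  have hay : a ≠ y := by rintro rfl; exact hy.2 hva
  have hp : p.IsPath := by
    simp [p, hab, hxb, hay, hx.1, Ne.symm hy.1, hva.ne', hvb.ne, hax.ne', hby.ne, hyx.ne']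
  exact CycleFree.not_adj_of_isPath (p := p) h5 hp (by simp [p]) hyx

theorem Shedding.exists_adj_closedNbhd_subset (hv : Shedding G v) (h5 : CycleFree G 5) :
    ∃ a, G.Adj v a ∧ closedNbhd G {a} ⊆ closedNbhd G {v} := by
  by_contra! hprivate
  have hprivate' (a : V) (hva : G.Adj v a) : ∃ x, G.Adj a x ∧ x ∉ closedNbhd G {v} := by
    obtain ⟨x, hxa, hxv⟩ := Set.not_subset.1 (hprivate a hva)
    refine ⟨x, (mem_closedNbhd_singleton.1 hxa).resolve_left ?_, hxv⟩
    rintro rfl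
    exact hxv (mem_closedNbhd_singleton.2 (Or.inr hva))
  choose! f hadj hfv using hprivate'
  have hindep : IsIndep G (f '' G.neighborSet v) := by
    rintro _ ⟨a, hva, rfl⟩ _ ⟨b, hvb, rfl⟩ hfab
    exact h5.not_adj_of_notMem_closedNbhd hvb hva (ne_of_apply_ne f hfab).symm (hadj b hvb)
      (hadj a hva) (hfv b hvb) (hfv a hva)
  have hdisj : Disjoint (f '' G.neighborSet v) (closedNbhd G {v}) := by
    rw [Set.disjoint_left]
    exact Set.forall_mem_image.2 hfv
  obtain ⟨u, hvu, hu⟩ := hv _ hdisj hindep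
  exact (isIndep_insert.1 hu).2 (f u) (Set.mem_image_of_mem f hvu) (hadj u hvu)

theorem CycleFree.simplicial_of_closedNbhd_subset (h4 : CycleFree G 4) (hva : G.Adj v a)
    (hsub : closedNbhd G {a} ⊆ closedNbhd G {v}) : Simplicial G a := by
  have hadj {x : V} (hax : G.Adj a x) (hxv : x ≠ v) : G.Adj v x :=
    (mem_closedNbhd_singleton.1 (hsub (mem_closedNbhd_singleton.2 (Or.inr hax)))).resolve_left hxv
  rw [simplicial_iff_isClique_neighborSet]
  intro x hax y hay hxy
  obtain rfl | hxv := eq_or_ne x v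
  · exact hadj hay hxy.symm
  obtain rfl | hyv := eq_or_ne y v
  · exact (hadj hax hxy).symm
  exact absurd (h4.commonNeighbors_subsingleton hva.ne ⟨hadj hax hxv, hax⟩ ⟨hadj hay hyv, hay⟩) hxy

end ShortCycles

section TwinSimplices

variable {V : Type*} {G : SimpleGraph V} {T X : Set V}

/-- A *twin simplex*: a clique that is the closed neighbourhood of two distinct vertices, so that
these two are simplicial. It is the common form of `K₂` and of the triangles in the theorem. -/
def IsTwinSimplex (G : SimpleGraph V) (T : Set V) : Prop :=
  G.IsClique T ∧ ∃ a b, a ≠ b ∧ closedNbhd G {a} = T ∧ closedNbhd G {b} = T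

theorem W2.exists_isTwinSimplex_mem [Finite V] (hW : W2 G) (h4 : CycleFree G 4)
    (h5 : CycleFree G 5) (v : V) : ∃ T, IsTwinSimplex G T ∧ v ∈ T := by
  obtain ⟨a, hva, hav⟩ := (hW.shedding v).exists_adj_closedNbhd_subset h5
  obtain ⟨b, hab, hba⟩ := (hW.shedding a).exists_adj_closedNbhd_subset h5
  have ha : Simplicial G a := h4.simplicial_of_closedNbhd_subset hva hav
  have hb : Simplicial G b := h4.simplicial_of_closedNbhd_subset hab hba
  have heq : closedNbhd G {a} = closedNbhd G {b} :=
    ha.closedNbhd_eq_of_mem hb (mem_closedNbhd_singleton.2 (Or.inr hab))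
  exact ⟨closedNbhd G {a}, ⟨ha, a, b, hab.ne, rfl, heq.symm⟩,
    mem_closedNbhd_singleton.2 (Or.inr hva.symm)⟩

theorem W2.isPartition_isTwinSimplex [Finite V] (hW : W2 G) (h4 : CycleFree G 4)
    (h5 : CycleFree G 5) : Setoid.IsPartition {T | IsTwinSimplex G T} := by
  refine ⟨fun ⟨_, a, _, _, ha, _⟩ => ?_, fun v => ?_⟩
  · exact Set.notMem_empty a (ha ▸ self_mem_closedNbhd_singleton G a)
  refine existsUnique_of_exists_of_unique (hW.exists_isTwinSimplex_mem h4 h5 v) ?_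
  rintro _ _ ⟨⟨hs, s, _, _, rfl, _⟩, hvs⟩ ⟨⟨ht, t, _, _, rfl, _⟩, hvt⟩
  obtain ⟨S, hS, hvS⟩ := hW.exists_isMaxIndep_mem v
  exact hS.closedNbhd_eq_of_simplicial hvS hs ht hvs hvt

theorem IsTwinSimplex.exists_closedNbhd_eq_of_isIndep (hT : IsTwinSimplex G T)
    (hX : IsIndep G X) : ∃ a ∉ X, closedNbhd G {a} = T := by
  obtain ⟨hclique, a, b, hab, rfl, hb⟩ := hT
  by_cases haX : a ∈ X
  · refine ⟨b, fun hbX => hX haX hbX hab ?_, hb⟩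
    exact hclique (self_mem_closedNbhd_singleton G a)
      (hb ▸ self_mem_closedNbhd_singleton G b) hab
  · exact ⟨a, haX, rfl⟩

theorem w2_of_isPartition_isTwinSimplex [Finite V] {P : Set (Set V)} (hP : Setoid.IsPartition P)
    (hPT : ∀ T ∈ P, IsTwinSimplex G T) : W2 G := by
  refine w2_iff_forall_exists_isMaxIndep.2 fun S X hS hX hSX => ?_
  obtain ⟨U, hSU, hU⟩ :=
    Finite.exists_le_maximal (p := fun U : Set V => IsIndep G U ∧ Disjoint U X) ⟨hS, hSX⟩
  refine ⟨U, hSU, hU.prop.1.isMaxIndep_of_forall_inter_nonempty hP (fun T hT => (hPT T hT).1)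
    fun T hT => ?_, hU.prop.2⟩
  obtain ⟨a, haX, rfl⟩ := (hPT T hT).exists_closedNbhd_eq_of_isIndep hX
  by_contra hempty
  have hdisj : Disjoint U (closedNbhd G {a}) :=
    Set.disjoint_iff_inter_eq_empty.2 (Set.not_nonempty_iff_eq_empty.1 hempty)
  have hinsert : IsIndep G (insert a U) := isIndep_insert.2 ⟨hU.prop.1, fun y hy hay =>
    Set.disjoint_left.1 hdisj hy (mem_closedNbhd_singleton.2 (Or.inr hay))⟩
  have haU : a ∈ U := hU.le_of_ge ⟨hinsert, Set.disjoint_insert_left.2 ⟨haX, hU.prop.2⟩⟩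
    (Set.subset_insert a U) (Set.mem_insert a U)
  exact Set.disjoint_left.1 hdisj haU (self_mem_closedNbhd_singleton G a)

theorem w2_iff_exists_isPartition_isTwinSimplex [Finite V] (h4 : CycleFree G 4)
    (h5 : CycleFree G 5) :
    W2 G ↔ ∃ P : Set (Set V), Setoid.IsPartition P ∧ ∀ T ∈ P, IsTwinSimplex G T :=
  ⟨fun hW => ⟨_, hW.isPartition_isTwinSimplex h4 h5, fun _ hT => hT⟩,
    fun ⟨_, hP, hPT⟩ => w2_of_isPartition_isTwinSimplex hP hPT⟩

end TwinSimplices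

section Triangles

variable {V : Type*} {G : SimpleGraph V} {T : Set V}

/-- A triangle of `G` containing at least two simplicial vertices of `G`. -/
def IsSimplicialTriangle (G : SimpleGraph V) (T : Set V) : Prop :=
  ∃ a b c : V, a ≠ b ∧ a ≠ c ∧ b ≠ c ∧ T = {a, b, c} ∧ G.Adj a b ∧ G.Adj a c ∧ G.Adj b c ∧
    ∃ s₁ ∈ T, ∃ s₂ ∈ T, s₁ ≠ s₂ ∧ Simplicial G s₁ ∧ Simplicial G s₂

theorem IsSimplicialTriangle.isTwinSimplex (h4 : CycleFree G 4) (hT : IsSimplicialTriangle G T) :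
    IsTwinSimplex G T := by
  obtain ⟨a, b, c, -, -, -, rfl, hab, hac, hbc, s, hsT, t, htT, hst, hs, ht⟩ := hT
  have hclique : G.IsClique {a, b, c} := by
    simp [isClique_insert, hab, hac, hbc]
  have hclosed {r : V} (hrT : r ∈ ({a, b, c} : Set V)) (hr : Simplicial G r) :
      closedNbhd G {r} = {a, b, c} := by
    have hsub := subset_closedNbhd_of_isClique hclique hrT
    refine Set.Subset.antisymm (fun x hx => by_contra fun hxT => ?_) hsub
    have hadj {y : V} (hy : y ∈ ({a, b, c} : Set V)) : G.Adj y x :=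
      hr (hsub hy) hx (ne_of_mem_of_not_mem hy hxT)
    have hcx : c = x := h4.commonNeighbors_subsingleton hab.ne ⟨hac, hbc⟩
      ⟨hadj (by simp), hadj (by simp)⟩
    exact hxT (by simp [hcx])
  exact ⟨hclique, s, t, hst, hclosed hsT hs, hclosed htT ht⟩

theorem IsTwinSimplex.eq_pair_or_isSimplicialTriangle (hT : IsTwinSimplex G T)
    (h4 : CycleFree G 4) :
    (∃ a b, a ≠ b ∧ T = {a, b} ∧ closedNbhd G T ⊆ T) ∨ IsSimplicialTriangle G T := by
  obtain ⟨hclique, a, b, hab, ha, hb⟩ := hT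
  have haT : a ∈ T := ha ▸ self_mem_closedNbhd_singleton G a
  have hbT : b ∈ T := hb ▸ self_mem_closedNbhd_singleton G b
  by_cases hthird : ∃ c ∈ T, a ≠ c ∧ b ≠ c
  · right
    obtain ⟨c, hcT, hac, hbc⟩ := hthird
    have hTeq : T = {a, b, c} := by
      refine Set.Subset.antisymm (fun x hx => ?_) (by simp [Set.insert_subset_iff, haT, hbT, hcT])
      by_contra! hxabc
      simp only [Set.mem_insert_iff, Set.mem_singleton_iff, not_or] at hxabc
      obtain ⟨hxa, hxb, hxc⟩ := hxabc
      exact hxc (h4.commonNeighbors_subsingleton hab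
        ⟨hclique haT hx (Ne.symm hxa), hclique hbT hx (Ne.symm hxb)⟩
        ⟨hclique haT hcT hac, hclique hbT hcT hbc⟩)
    exact ⟨a, b, c, hab, hac, hbc, hTeq, hclique haT hbT hab, hclique haT hcT hac,
      hclique hbT hcT hbc, a, haT, b, hbT, hab, by rwa [Simplicial, ha], by rwa [Simplicial, hb]⟩
  · left
    push Not at hthird
    have hTeq : T = {a, b} := by
      refine Set.Subset.antisymm (fun x hx => ?_) (by simp [Set.insert_subset_iff, haT, hbT])
      by_cases hax : a = x
      exacts [Or.inl hax.symm, Or.inr (hthird x hx hax).symm]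
    refine ⟨a, b, hab, hTeq, Set.union_subset subset_rfl ?_⟩
    rintro x ⟨r, hr, hrx⟩
    rw [hTeq] at hr
    obtain rfl | rfl := hr
    exacts [ha ▸ mem_closedNbhd_singleton.2 (Or.inr hrx),
      hb ▸ mem_closedNbhd_singleton.2 (Or.inr hrx)]

theorem nonempty_iso_top_of_isClique_univ {n : ℕ} [NeZero n] (hG : G.IsClique Set.univ)
    (hcard : Nat.card V = n) : Nonempty (G ≃g (⊤ : SimpleGraph (Fin n))) := by
  have : Finite V := Nat.finite_of_card_ne_zero (hcard ▸ NeZero.ne n)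
  obtain rfl := isClique_univ.1 hG
  exact ⟨Iso.completeGraph (Finite.equivFinOfCardEq hcard)⟩

theorem IsTwinSimplex.nonempty_iso_or_isSimplicialTriangle (hT : IsTwinSimplex G T)
    (hconn : G.Connected) (h4 : CycleFree G 4) :
    Nonempty (G ≃g (⊤ : SimpleGraph (Fin 2))) ∨ IsSimplicialTriangle G T := by
  refine (hT.eq_pair_or_isSimplicialTriangle h4).imp_left ?_
  rintro ⟨a, b, hab, hTeq, hclosed⟩
  have huniv : T = Set.univ :=
    eq_univ_of_closedNbhd_subset hconn.preconnected (hTeq ▸ Set.insert_nonempty a {b}) hclosed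
  refine nonempty_iso_top_of_isClique_univ (huniv ▸ hT.1) ?_
  rw [← Set.ncard_univ, ← huniv, hTeq, Set.ncard_pair hab]

theorem isTwinSimplex_univ_of_iso_top {W : Type*} [Nontrivial W]
    (φ : G ≃g (⊤ : SimpleGraph W)) : IsTwinSimplex G Set.univ := by
  have hclique : G.IsClique Set.univ := fun x _ y _ hxy =>
    φ.map_adj_iff.1 (φ.injective.ne hxy)
  have hclosed (x : V) : closedNbhd G {x} = Set.univ :=
    Set.univ_subset_iff.1 (subset_closedNbhd_of_isClique hclique (Set.mem_univ x))
  obtain ⟨i, j, hij⟩ := exists_pair_ne W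
  exact ⟨hclique, φ.symm i, φ.symm j, φ.symm.injective.ne hij, hclosed _, hclosed _⟩

theorem isPartition_singleton_univ {α : Type*} [Nonempty α] :
    Setoid.IsPartition ({Set.univ} : Set (Set α)) :=
  ⟨fun h => Set.empty_ne_univ h, fun x => ⟨Set.univ, ⟨rfl, Set.mem_univ x⟩, fun _ h => h.1⟩⟩

end Triangles

/-- A connected graph with neither `C₄` nor `C₅` as a subgraph is in `W₂`
iff it is isomorphic to `K₂` or its vertex set can be partitioned into triangles, each
containing at least two simplicial vertices of `G`. -/
theorem stmt3 {V : Type*} [Fintype V] (G : SimpleGraph V) (hconn : G.Connected)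
    (h4 : CycleFree G 4) (h5 : CycleFree G 5) :
    W2 G ↔
      (Nonempty (G ≃g (⊤ : SimpleGraph (Fin 2))) ∨
        ∃ P : Set (Set V), Setoid.IsPartition P ∧
          ∀ T ∈ P, ∃ a b c : V, a ≠ b ∧ a ≠ c ∧ b ≠ c ∧ T = {a, b, c} ∧
            G.Adj a b ∧ G.Adj a c ∧ G.Adj b c ∧
            ∃ s₁ ∈ T, ∃ s₂ ∈ T, s₁ ≠ s₂ ∧ Simplicial G s₁ ∧ Simplicial G s₂) := by
  rw [w2_iff_exists_isPartition_isTwinSimplex h4 h5]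
  constructor
  · rintro ⟨P, hP, hPT⟩
    refine or_iff_not_imp_left.2 fun hK2 => ⟨P, hP, fun T hT => ?_⟩
    exact ((hPT T hT).nonempty_iso_or_isSimplicialTriangle hconn h4).resolve_left hK2
  · rintro (⟨⟨φ⟩⟩ | ⟨P, hP, hPT⟩)
    · have := hconn.nonempty
      exact ⟨{Set.univ}, isPartition_singleton_univ, by simpa using isTwinSimplex_univ_of_iso_top φ⟩
    · exact ⟨P, hP, fun T hT => IsSimplicialTriangle.isTwinSimplex h4 (hPT T hT)⟩
end

section
/- Let G be a well-covered graph. Then the following are equivalent: (1) G belongs to the class W2; (2) for every vertex v ∈ V(G) and every maximal independent set S of the induced subgraph G[V(G) \ N[v]], the independence number of the induced subgraph on N(v) \ N(S) equals 1. -/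
open SimpleGraph

/-!
The exchange step: if `v` is a vertex of a maximum independent set `T` and `u` lies in
`N(v) \ N(T \ {v})`, then `T \ {v} ∪ {u}` is again maximum. A neighbor of a vertex of an
independent set `B` is not in `B`, so each such exchange at a vertex of `T ∩ B` shrinks `T ∩ B`;
hence `T` can be moved off `B`. Conversely, in a `W₂` graph, extending `T \ {v}` to a maximum
independent set disjoint from `{v}` yields such a `u`. So `W₂` says that `N(v) \ N(S)` is never
empty; that it is a clique is well-coveredness, since two nonadjacent vertices in it could replace
the single vertex `v`.
-/

/-- The exchange property of maximum independent sets of `G[A]`: every vertex of such a set can be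
traded for one of its neighbors. It is the condition to which both sides of the theorem are
reduced. -/
def HasExchangeOn {V : Type*} (G : SimpleGraph V) (A : Set V) : Prop :=
  ∀ T, IsMaxIndepOn G A T → ∀ v ∈ T, ∃ u, G.Adj v u ∧ IsMaxIndepOn G A (insert u (T \ {v}))

section

variable {V : Type*} {G : SimpleGraph V} {A B S T : Set V} {u v : V}

theorem closedNbhd_insert :
    closedNbhd G (insert v S) = closedNbhd G {v} ∪ closedNbhd G S := by
  ext x
  simp only [closedNbhd, Set.mem_union, Set.mem_insert_iff, Set.mem_ofPred_eq, exists_eq_or_imp,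
    Set.mem_singleton_iff, exists_eq_left]
  tauto

theorem subset_compl_closedNbhd_singleton_iff :
    S ⊆ (closedNbhd G {v})ᶜ ↔ v ∉ closedNbhd G S := by
  simp only [closedNbhd, Set.subset_def, Set.mem_compl_iff, Set.mem_union, Set.mem_singleton_iff,
    Set.mem_ofPred_eq, exists_eq_left, G.adj_comm v]
  grind

theorem neighborSet_sdiff_openNbhd (hv : v ∉ closedNbhd G S) :
    G.neighborSet v \ openNbhd G S = G.neighborSet v \ closedNbhd G S :=
  Set.ext fun u => and_congr_right fun hvu => not_congr <|
    and_iff_left fun hu => hv (Or.inr ⟨u, hu, G.adj_symm hvu⟩)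

theorem isIndep_insert_iff (hv : v ∉ S) :
    IsIndep G (insert v S) ↔ IsIndep G S ∧ v ∉ closedNbhd G S := by
  have : Std.Symm fun a b => ¬G.Adj a b := ⟨fun _ _ h h' => h h'.symm⟩
  rw [IsIndep, Set.pairwise_insert_of_symm_of_notMem hv]
  simp only [IsIndep, closedNbhd, Set.mem_union, Set.mem_ofPred_eq, hv, false_or, not_exists,
    not_and, G.adj_comm v]

theorem IsIndep.insert (hS : IsIndep G S) (hv : v ∉ closedNbhd G S) : IsIndep G (insert v S) :=
  (isIndep_insert_iff fun h => hv (Or.inl h)).2 ⟨hS, hv⟩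

theorem isMaximalIndepOn_iff_dominates :
    IsMaximalIndepOn G A S ↔ S ⊆ A ∧ IsIndep G S ∧ Dominates G S A := by
  refine and_congr_right fun hSA => and_congr_right fun hS => ⟨fun hmax u hu => ?_, ?_⟩
  · by_contra hnot
    have hinsert := hmax _ (Set.insert_subset hu hSA) (hS.insert hnot) (Set.subset_insert u S)
    exact hnot (Or.inl (hinsert ▸ Set.mem_insert u S))
  · intro hdom T hTA hT hST
    refine hST.antisymm fun u hu => (hdom (hTA hu)).resolve_right ?_
    rintro ⟨s, hs, hsu⟩
    exact hT (hST hs) hu hsu.ne hsu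

theorem isMaximalIndepOn_compl_closedNbhd_iff :
    IsMaximalIndepOn G (closedNbhd G {v})ᶜ S ↔ v ∉ S ∧ IsMaximalIndep G (insert v S) := by
  rw [IsMaximalIndep, isMaximalIndepOn_iff_dominates, isMaximalIndepOn_iff_dominates, Dominates,
    Dominates, closedNbhd_insert, Set.compl_subset_iff_union, Set.univ_subset_iff,
    subset_compl_closedNbhd_singleton_iff]
  constructor
  · rintro ⟨hv, hS, hdom⟩
    exact ⟨fun h => hv (Or.inl h), Set.subset_univ _, hS.insert hv, hdom⟩
  · rintro ⟨hvS, -, hS, hdom⟩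
    obtain ⟨hS, hv⟩ := (isIndep_insert_iff hvS).1 hS
    exact ⟨hv, hS, hdom⟩

theorem IsIndep.exists_isMaximalIndepOn_superset (hS : IsIndep G S) (hSA : S ⊆ A) :
    ∃ T, S ⊆ T ∧ IsMaximalIndepOn G A T := by
  obtain ⟨T, hST, hT⟩ := zorn_subset_nonempty {T | T ⊆ A ∧ IsIndep G T}
    (fun c hc hchain _ => ⟨⋃₀ c, ⟨Set.sUnion_subset fun s hs => (hc hs).1,
      hchain.pairwise_sUnion.2 fun s hs => (hc hs).2⟩, fun s => Set.subset_sUnion_of_mem⟩)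
    S ⟨hSA, hS⟩
  exact ⟨T, hST, hT.prop.1, hT.prop.2, fun U hUA hU hTU => hT.eq_of_subset ⟨hUA, hU⟩ hTU⟩

theorem WellCoveredOn.exists_isMaxIndepOn_superset (hwc : WellCoveredOn G A) (hS : IsIndep G S)
    (hSA : S ⊆ A) : ∃ T, S ⊆ T ∧ IsMaxIndepOn G A T :=
  (hS.exists_isMaximalIndepOn_superset hSA).imp fun T => And.imp_right (hwc T)

theorem IsMaxIndepOn.finite_of_isIndep (hT : IsMaxIndepOn G A T) (hS : IsIndep G S)
    (hSA : S ⊆ A) : S.Finite := by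
  by_contra hinf
  -- `S.ncard = 0` here, so the maximality of `T` has to be tested on finite subsets of `S`.
  obtain ⟨U, hUS, -, hU⟩ := Set.Infinite.exists_subset_ncard_eq hinf (T.ncard + 1)
  have := hT.2.2 U (hUS.trans hSA) (hS.mono hUS)
  omega

theorem IsMaxIndepOn.finite (hT : IsMaxIndepOn G A T) : T.Finite :=
  hT.finite_of_isIndep hT.2.1 hT.1

theorem IsMaxIndepOn.isMaximalIndepOn (hT : IsMaxIndepOn G A T) : IsMaximalIndepOn G A T :=
  ⟨hT.1, hT.2.1, fun U hUA hU hTU =>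
    Set.eq_of_subset_of_ncard_le hTU (hT.2.2 U hUA hU) (hT.finite_of_isIndep hU hUA)⟩

theorem IsMaxIndepOn.exchange (hT : IsMaxIndepOn G A T) (hv : v ∈ T) (huT : u ∉ T) (hu : u ∈ A)
    (hindep : IsIndep G (insert u (T \ {v}))) : IsMaxIndepOn G A (insert u (T \ {v})) :=
  ⟨Set.insert_subset hu (Set.sdiff_subset.trans hT.1), hindep, fun U hUA hU =>
    (hT.2.2 U hUA hU).trans_eq (Set.ncard_exchange huT hv).symm⟩

theorem HasExchangeOn.exists_disjoint (hex : HasExchangeOn G A) (hT : IsMaxIndepOn G A T)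
    (hST : S ⊆ T) (hB : IsIndep G B) (hSB : Disjoint S B) :
    ∃ U, S ⊆ U ∧ IsMaxIndepOn G A U ∧ Disjoint U B := by
  obtain ⟨U, ⟨hSU, hU⟩, hmin⟩ := exists_minimalFor_of_wellFoundedLT
    (fun U => S ⊆ U ∧ IsMaxIndepOn G A U) (fun U => (U ∩ B).ncard) ⟨T, hST, hT⟩
  refine ⟨U, hSU, hU, Set.disjoint_left.2 fun v hvU hvB => ?_⟩
  obtain ⟨u, hvu, hU'⟩ := hex U hU v hvU
  have huB : u ∉ B := fun huB => hB hvB huB hvu.ne hvu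
  have hSU' : S ⊆ insert u (U \ {v}) :=
    (Set.subset_sdiff_singleton hSU (Set.disjoint_right.1 hSB hvB)).trans (Set.subset_insert _ _)
  have hinter : insert u (U \ {v}) ∩ B = (U ∩ B) \ {v} := by
    rw [Set.insert_inter_of_notMem huB, Set.sdiff_inter_right_comm]
  have hlt : (insert u (U \ {v}) ∩ B).ncard < (U ∩ B).ncard :=
    hinter ▸ Set.ncard_sdiff_singleton_lt_of_mem ⟨hvU, hvB⟩ (hU.finite.inter_of_left B)
  exact hlt.not_ge (hmin ⟨hSU', hU'⟩ hlt.le)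

theorem W2On.wellCoveredOn (hW : W2On G A) : WellCoveredOn G A := by
  intro S hS
  obtain ⟨T, -, hST, -, hT, -⟩ := hW S ∅ hS.1 (Set.empty_subset A) hS.2.1 (Set.pairwise_empty _)
    (Set.disjoint_empty S)
  exact hS.2.2 T hT.1 hT.2.1 hST ▸ hT

theorem W2On.hasExchangeOn (hW : W2On G A) : HasExchangeOn G A := by
  intro T hT v hv
  obtain ⟨U, W, hTU, hvW, hU, -, hUW⟩ := hW (T \ {v}) {v} (Set.sdiff_subset.trans hT.1)
    (Set.singleton_subset_iff.2 (hT.1 hv)) (hT.2.1.mono Set.sdiff_subset)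
    (Set.pairwise_singleton _ _) Set.disjoint_sdiff_left
  have hvU : v ∉ U := Set.disjoint_right.1 hUW (hvW rfl)
  have hlt : (T \ {v}).ncard < U.ncard :=
    (Set.ncard_sdiff_singleton_lt_of_mem hv hT.finite).trans_le (hU.2.2 T hT.1 hT.2.1)
  obtain ⟨u, huU, hu⟩ :=
    Set.exists_mem_notMem_of_ncard_lt_ncard hlt (hT.finite.subset Set.sdiff_subset)
  have huv : u ≠ v := fun h => hvU (h ▸ huU)
  have huT : u ∉ T := fun h => hu ⟨h, huv⟩
  have hindep : IsIndep G (insert u (T \ {v})) := hU.2.1.mono (Set.insert_subset huU hTU)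
  refine ⟨u, ?_, hT.exchange hv huT (hU.1 huU) hindep⟩
  obtain ⟨s, hs, hsu⟩ :=
    ((isMaximalIndepOn_iff_dominates.1 hT.isMaximalIndepOn).2.2 (hU.1 huU)).resolve_left huT
  by_cases hsv : s = v
  · exact hsv ▸ hsu
  · exact absurd hsu (hU.2.1 (hTU ⟨hs, hsv⟩) huU hsu.ne)

theorem w2On_iff_wellCoveredOn_and_hasExchangeOn :
    W2On G A ↔ WellCoveredOn G A ∧ HasExchangeOn G A := by
  refine ⟨fun hW => ⟨hW.wellCoveredOn, hW.hasExchangeOn⟩, ?_⟩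
  rintro ⟨hwc, hex⟩ S₁ S₂ h₁A h₂A hS₁ hS₂ hdisj
  obtain ⟨U₁, hSU₁, hU₁⟩ := hwc.exists_isMaxIndepOn_superset hS₁ h₁A
  obtain ⟨T₁, hST₁, hT₁, hdisj₁⟩ := hex.exists_disjoint hU₁ hSU₁ hS₂ hdisj
  obtain ⟨U₂, hSU₂, hU₂⟩ := hwc.exists_isMaxIndepOn_superset hS₂ h₂A
  obtain ⟨T₂, hST₂, hT₂, hdisj₂⟩ := hex.exists_disjoint hU₂ hSU₂ hT₁.2.1 hdisj₁.symm
  exact ⟨T₁, T₂, hST₁, hST₂, hT₁, hT₂, hdisj₂.symm⟩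

theorem alphaOn_eq_one_iff : alphaOn G A = 1 ↔ A.Nonempty ∧ G.IsClique A := by
  constructor
  · intro hα
    have hbdd : BddAbove {n | ∃ S, S ⊆ A ∧ IsIndep G S ∧ S.ncard = n} := by
      by_contra hunbdd
      exact zero_ne_one ((Nat.sSup_of_not_bddAbove hunbdd).symm.trans hα)
    obtain ⟨S, hSA, -, hS⟩ : 1 ∈ {n | ∃ S, S ⊆ A ∧ IsIndep G S ∧ S.ncard = n} :=
      hα ▸ Nat.sSup_mem ⟨0, ∅, Set.empty_subset A, Set.pairwise_empty _, Set.ncard_empty V⟩ hbdd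
    refine ⟨(Set.nonempty_of_ncard_ne_zero (by omega)).mono hSA, fun a ha b hb hab => ?_⟩
    by_contra hadj
    have hpair : IsIndep G {a, b} :=
      IsIndep.insert (Set.pairwise_singleton b _) <| by
        rintro (rfl | ⟨_, rfl, hba⟩)
        exacts [hab rfl, hadj hba.symm]
    have hle : 2 ≤ alphaOn G A :=
      le_csSup hbdd ⟨{a, b}, Set.pair_subset ha hb, hpair, Set.ncard_pair hab⟩
    omega
  · rintro ⟨⟨a, ha⟩, hclique⟩
    refine IsGreatest.csSup_eq ⟨⟨{a}, Set.singleton_subset_iff.2 ha, Set.pairwise_singleton _ _,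
      Set.ncard_singleton a⟩, ?_⟩
    rintro _ ⟨S, hSA, hS, rfl⟩
    have hsub : S.Subsingleton := fun x hx y hy =>
      by_contra fun hxy => hS hx hy hxy (hclique (hSA hx) (hSA hy) hxy)
    exact (Set.ncard_le_one hsub.finite).2 fun x hx y hy => hsub hx hy

theorem IsMaxIndepOn.isClique_sdiff_closedNbhd (hmax : IsMaxIndepOn G A (insert v S)) :
    G.IsClique (A \ closedNbhd G S) := by
  rintro a ⟨haA, ha⟩ b ⟨hbA, hb⟩ hab
  by_contra hadj
  have hS : IsIndep G S := hmax.2.1.mono (Set.subset_insert v S)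
  have hfin : S.Finite := hmax.finite.subset (Set.subset_insert v S)
  have hab' : a ∉ closedNbhd G (insert b S) := by
    rw [closedNbhd_insert]
    rintro ((rfl | ⟨_, rfl, hba⟩) | haS)
    exacts [hab rfl, hadj hba.symm, ha haS]
  have hindep : IsIndep G (insert a (insert b S)) := (hS.insert hb).insert hab'
  have hcard : (insert a (insert b S)).ncard = S.ncard + 2 := by
    rw [Set.ncard_insert_of_notMem (fun h => hab' (Or.inl h)) (hfin.insert b),
      Set.ncard_insert_of_notMem (fun h => hb (Or.inl h)) hfin]
  have hSA : S ⊆ A := (Set.subset_insert v S).trans hmax.1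
  have hle := hmax.2.2 _ (Set.insert_subset haA (Set.insert_subset hbA hSA)) hindep
  have hge := Set.ncard_insert_le v S
  omega

theorem WellCovered.hasExchangeOn_univ_iff (hwc : WellCovered G) :
    HasExchangeOn G Set.univ ↔ ∀ v : V, ∀ S : Set V, IsMaximalIndepOn G (closedNbhd G {v})ᶜ S →
      alphaOn G (G.neighborSet v \ openNbhd G S) = 1 := by
  constructor
  · intro hex v S hS
    have hv : v ∉ closedNbhd G S := subset_compl_closedNbhd_singleton_iff.1 hS.1
    obtain ⟨hvS, hmaximal⟩ := isMaximalIndepOn_compl_closedNbhd_iff.1 hS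
    have hmax : IsMaxIndep G (insert v S) := hwc _ hmaximal
    obtain ⟨u, hvu, hu⟩ := hex _ hmax v (Set.mem_insert v S)
    rw [Set.insert_sdiff_self_of_notMem hvS] at hu
    have huS : u ∉ S := fun h => hv (Or.inr ⟨u, h, hvu.symm⟩)
    rw [neighborSet_sdiff_openNbhd hv, alphaOn_eq_one_iff]
    exact ⟨⟨u, hvu, ((isIndep_insert_iff huS).1 hu.2.1).2⟩,
      hmax.isClique_sdiff_closedNbhd.subset (Set.sdiff_subset_sdiff_left (Set.subset_univ _))⟩
  · intro h T hT v hvT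
    have hS : IsMaximalIndepOn G (closedNbhd G {v})ᶜ (T \ {v}) := by
      rw [isMaximalIndepOn_compl_closedNbhd_iff, Set.insert_sdiff_self_of_mem hvT]
      exact ⟨fun h => h.2 rfl, hT.isMaximalIndepOn⟩
    have hα := h v (T \ {v}) hS
    rw [neighborSet_sdiff_openNbhd (subset_compl_closedNbhd_singleton_iff.1 hS.1),
      alphaOn_eq_one_iff] at hα
    obtain ⟨u, hvu, hu⟩ := hα.1
    have huT : u ∉ T := fun huT => hT.2.1 hvT huT (G.ne_of_adj hvu) hvu
    exact ⟨u, hvu, hT.exchange hvT huT (Set.mem_univ u) (hS.2.1.insert hu)⟩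

end

theorem stmt5_general {V : Type*} (G : SimpleGraph V) :
    W2 G ↔ WellCovered G ∧
      ∀ v : V, ∀ S : Set V, IsMaximalIndepOn G (closedNbhd G {v})ᶜ S →
        alphaOn G (G.neighborSet v \ openNbhd G S) = 1 :=
  w2On_iff_wellCoveredOn_and_hasExchangeOn.trans
    (and_congr_right WellCovered.hasExchangeOn_univ_iff)

/-- A well-covered graph `G` is in `W₂` iff for every vertex `v` and every
maximal independent set `S` of `G[V(G) \ N[v]]`, the independence number of the induced
subgraph on `N(v) \ N(S)` equals 1. -/
theorem stmt5 {V : Type*} [Fintype V] (G : SimpleGraph V) (hwc : WellCovered G) :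
    W2 G ↔ ∀ v : V, ∀ S : Set V, IsMaximalIndepOn G (closedNbhd G {v})ᶜ S →
      alphaOn G (G.neighborSet v \ openNbhd G S) = 1 := by
  rw [stmt5_general, and_iff_right hwc]
end
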